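/- Let p ≥ 5 be a prime and write K_u = K(u) for u = 0, 1, …, p−1. Then the elementary symmetric functions of the Kloosterman sums satisfy: ∑_{0≤j<k≤p−1} K_j·K_k = −(p² − p)/2; ∑_{0≤i<j<k≤p−1} K_i·K_j·K_k = (p/3)·[((−3)/p)·p + 2], where ((−3)/p) is the Legendre symbol; and ∑_{0≤i<j<k<l≤p−1} K_i·K_j·K_k·K_l = (1/8)·p·(p−3)·(p² − 3p − 2). -/

import Mathlib

/-!
Newton's identities express the elementary symmetric functions of the values `K(u)` through the
power sums `∑_u K(u)^n`, `n ≤ 4`, so it suffices to evaluate these.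

Write `ψ` for the standard additive character. In `K(u)^n`, call one summation variable `z` and
scale the others by `z`: the exponents become `z·A + u·z⁻¹·B` with `A = 1 + a + b + ⋯` and
`B = 1 + a⁻¹ + b⁻¹ + ⋯`. Summing over `u` forces `B = 0` and gives a factor `p`; summing over the
unit `z` then gives `p·[A = 0] - 1` (`sum_sum_char`). Hence `∑_u K(u)^n = p·(p·N - M)`, where `M`
counts the unit tuples with `B = 0` and `N` those with `A = B = 0`.

* `n = 3`: `M = p - 2`, and `A = B = 0` amounts to `a² + a + 1 = 0`, whose discriminant is `-3`, so
  `N = 1 + (-3/p)`.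
* `n = 4`: `M = p² - 3p + 3`, and for `A = 0` the condition `B = 0` becomes
  `(1 + a)(1 + b)(1 + c) = 0` (`recip_iff`), so `N = 3(p - 2)`.
-/

open scoped BigOperators

/-- The classical Kloosterman sum `K(u) = ∑_{x ∈ (ℤ/pℤ)ˣ} exp(2πi(x + u·x⁻¹)/p)`. -/
noncomputable def K (p : ℕ) [Fact p.Prime] (u : ZMod p) : ℂ :=
  ∑ x : (ZMod p)ˣ,
    Complex.exp (2 * Real.pi * Complex.I *
      ((((x : ZMod p) + u * ((x⁻¹ : (ZMod p)ˣ) : ZMod p)).val : ℕ) : ℂ) / p)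

/-! ### Newton's identities -/

section Newton

variable (f : ℕ → ℂ)

lemma newton_two (n : ℕ) :
    ∑ k ∈ Finset.range n, ∑ j ∈ Finset.range k, f j * f k =
      ((∑ i ∈ Finset.range n, f i) ^ 2 - ∑ i ∈ Finset.range n, f i ^ 2) / 2 := by
  induction n with
  | zero => simp
  | succ n ih =>
    simp only [← Finset.sum_mul] at ih ⊢
    simp only [Finset.sum_range_succ _ n, ih]
    ring

lemma newton_three (n : ℕ) :
    ∑ k ∈ Finset.range n, ∑ j ∈ Finset.range k, ∑ i ∈ Finset.range j, f i * f j * f k =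
      ((∑ i ∈ Finset.range n, f i) ^ 3
        - 3 * (∑ i ∈ Finset.range n, f i) * ∑ i ∈ Finset.range n, f i ^ 2
        + 2 * ∑ i ∈ Finset.range n, f i ^ 3) / 6 := by
  induction n with
  | zero => simp
  | succ n ih =>
    have h := newton_two f n
    simp only [← Finset.sum_mul] at h ih ⊢
    simp only [Finset.sum_range_succ _ n, ih, h]
    ring

lemma newton_four (n : ℕ) :
    ∑ l ∈ Finset.range n, ∑ k ∈ Finset.range l, ∑ j ∈ Finset.range k, ∑ i ∈ Finset.range j,
        f i * f j * f k * f l =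
      ((∑ i ∈ Finset.range n, f i) ^ 4
        - 6 * (∑ i ∈ Finset.range n, f i) ^ 2 * ∑ i ∈ Finset.range n, f i ^ 2
        + 3 * (∑ i ∈ Finset.range n, f i ^ 2) ^ 2
        + 8 * (∑ i ∈ Finset.range n, f i) * ∑ i ∈ Finset.range n, f i ^ 3
        - 6 * ∑ i ∈ Finset.range n, f i ^ 4) / 24 := by
  induction n with
  | zero => simp
  | succ n ih =>
    have h := newton_three f n
    simp only [← Finset.sum_mul] at h ih ⊢
    simp only [Finset.sum_range_succ _ n, ih, h]
    ring

end Newton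

/-! ### Power sums of Kloosterman sums as counts -/

section PowerSums

variable (p : ℕ) [Fact p.Prime]

lemma K_eq_stdAddChar (u : ZMod p) :
    K p u = ∑ x : (ZMod p)ˣ, ZMod.stdAddChar (N := p) ((x : ZMod p) + u * ((x⁻¹ : (ZMod p)ˣ) : ZMod p)) := by
  unfold K
  refine Finset.sum_congr rfl fun x _ => ?_
  rw [ZMod.stdAddChar_apply, ZMod.toCircle_apply]

/-- The summation variable of `K` may be rescaled by a fixed unit `z`. -/
lemma K_rescale (u : ZMod p) (z : (ZMod p)ˣ) :
    K p u = ∑ a : (ZMod p)ˣ,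
      ZMod.stdAddChar (N := p) ((z : ZMod p) * a +
        u * (((z⁻¹ : (ZMod p)ˣ) : ZMod p) * ((a⁻¹ : (ZMod p)ˣ) : ZMod p))) := by
  rw [K_eq_stdAddChar, ← Equiv.sum_comp (Equiv.mulLeft z)]
  refine Finset.sum_congr rfl fun a _ => ?_
  simp only [Equiv.coe_mulLeft, mul_inv, Units.val_mul]

lemma sum_char (b : ZMod p) :
    ∑ u : ZMod p, (ZMod.stdAddChar (N := p) (u * b) : ℂ) = if b = 0 then (p : ℂ) else 0 := by
  have := AddChar.sum_mulShift b (ZMod.isPrimitive_stdAddChar p)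
  simpa [ZMod.card] using this

lemma sum_char_units (b : ZMod p) :
    ∑ z : (ZMod p)ˣ, (ZMod.stdAddChar (N := p) ((z : ZMod p) * b) : ℂ)
      = (if b = 0 then (p : ℂ) else 0) - 1 := by
  rw [← sum_char, Fintype.sum_eq_add_sum_subtype_ne _ (0 : ZMod p),
    ← Equiv.sum_comp (unitsEquivNeZero (G₀ := ZMod p))]
  simp

/-- Orthogonality in `u` and then in the scaling parameter `z`. -/
lemma sum_sum_char (A B : ZMod p) :
    ∑ u : ZMod p, ∑ z : (ZMod p)ˣ,
      (ZMod.stdAddChar (N := p) ((z : ZMod p) * A + u * (((z⁻¹ : (ZMod p)ˣ) : ZMod p) * B)) : ℂ)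
      = p * (if B = 0 then ((p : ℂ) * (if A = 0 then 1 else 0) - 1) else 0) := by
  rw [Finset.sum_comm]
  simp only [AddChar.map_add_eq_mul, ← Finset.mul_sum, sum_char, Units.mul_right_eq_zero]
  rw [← Finset.sum_mul, sum_char_units]
  split_ifs <;> ring

lemma sum_K : ∑ u : ZMod p, K p u = 0 := by
  simp only [K_eq_stdAddChar]
  rw [Finset.sum_comm]
  simp only [AddChar.map_add_eq_mul, ← Finset.mul_sum, sum_char, Units.ne_zero, if_false,
    mul_zero, Finset.sum_const_zero]

lemma sum_K_sq : ∑ u : ZMod p, K p u ^ 2 = (p : ℂ) * (p - 1) := by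
  have h : ∀ u : ZMod p, K p u ^ 2 = ∑ a : (ZMod p)ˣ, ∑ z : (ZMod p)ˣ,
      (ZMod.stdAddChar (N := p) ((z : ZMod p) * (1 + a) +
        u * (((z⁻¹ : (ZMod p)ˣ) : ZMod p) * (1 + ((a⁻¹ : (ZMod p)ˣ) : ZMod p)))) : ℂ) := by
    intro u
    rw [pow_two]
    nth_rw 1 [K_eq_stdAddChar]
    rw [Finset.sum_mul, Finset.sum_comm]
    refine Finset.sum_congr rfl fun z _ => ?_
    rw [K_rescale p u z, Finset.mul_sum]
    refine Finset.sum_congr rfl fun a _ => ?_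
    rw [← AddChar.map_add_eq_mul]
    congr 1; ring
  simp only [h]
  rw [Finset.sum_comm]
  simp only [sum_sum_char]
  rw [← Finset.mul_sum, Finset.sum_eq_single (-1 : (ZMod p)ˣ)]
  · simp
  · intro a _ ha
    rw [if_neg]
    contrapose! ha
    have h2 : ((a⁻¹ : (ZMod p)ˣ) : ZMod p) = ((-1 : (ZMod p)ˣ) : ZMod p) := by
      rw [Units.val_neg, Units.val_one]; linear_combination ha
    have h3 := Units.ext h2
    rw [inv_eq_iff_eq_inv] at h3
    simpa using h3
  · simp

lemma sum_rotate_three {α : Type*} [Fintype α] (F : α → α → α → ℂ) :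
    ∑ a, ∑ b, ∑ z, F a b z = ∑ z, ∑ a, ∑ b, F a b z := by
  refine Eq.trans ?_ (Finset.sum_comm)
  exact Finset.sum_congr rfl fun a _ => Finset.sum_comm

lemma sum_rotate_four {α : Type*} [Fintype α] (F : α → α → α → α → ℂ) :
    ∑ a, ∑ b, ∑ c, ∑ z, F a b c z = ∑ z, ∑ a, ∑ b, ∑ c, F a b c z := by
  refine Eq.trans ?_ (Finset.sum_comm)
  exact Finset.sum_congr rfl fun a _ => sum_rotate_three _

lemma sum_K_cube_aux : ∑ u : ZMod p, K p u ^ 3 = p * ∑ a : (ZMod p)ˣ, ∑ b : (ZMod p)ˣ,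
    (if 1 + ((a⁻¹ : (ZMod p)ˣ) : ZMod p) + ((b⁻¹ : (ZMod p)ˣ) : ZMod p) = 0 then
      ((p : ℂ) * (if 1 + (a : ZMod p) + b = 0 then 1 else 0) - 1) else 0) := by
  have h : ∀ u : ZMod p, K p u ^ 3 = ∑ a : (ZMod p)ˣ, ∑ b : (ZMod p)ˣ, ∑ z : (ZMod p)ˣ,
      (ZMod.stdAddChar (N := p) ((z : ZMod p) * (1 + a + b) +
        u * (((z⁻¹ : (ZMod p)ˣ) : ZMod p) *
          (1 + ((a⁻¹ : (ZMod p)ˣ) : ZMod p) + ((b⁻¹ : (ZMod p)ˣ) : ZMod p)))) : ℂ) := by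
    intro u
    rw [pow_three]
    nth_rw 1 [K_eq_stdAddChar]
    rw [Finset.sum_mul, sum_rotate_three]
    refine Finset.sum_congr rfl fun z _ => ?_
    rw [K_rescale p u z, Finset.sum_mul_sum, Finset.mul_sum]
    refine Finset.sum_congr rfl fun a _ => ?_
    rw [Finset.mul_sum]
    refine Finset.sum_congr rfl fun b _ => ?_
    rw [← AddChar.map_add_eq_mul, ← AddChar.map_add_eq_mul]
    congr 1; ring
  simp only [h]
  rw [Finset.sum_comm, Finset.mul_sum]
  refine Finset.sum_congr rfl fun a _ => ?_
  rw [Finset.sum_comm, Finset.mul_sum]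
  simp only [sum_sum_char]

lemma sum_K_four_aux : ∑ u : ZMod p, K p u ^ 4 =
    p * ∑ a : (ZMod p)ˣ, ∑ b : (ZMod p)ˣ, ∑ c : (ZMod p)ˣ,
    (if 1 + ((a⁻¹ : (ZMod p)ˣ) : ZMod p) + ((b⁻¹ : (ZMod p)ˣ) : ZMod p)
        + ((c⁻¹ : (ZMod p)ˣ) : ZMod p) = 0 then
      ((p : ℂ) * (if 1 + (a : ZMod p) + b + c = 0 then 1 else 0) - 1) else 0) := by
  have h : ∀ u : ZMod p, K p u ^ 4 =
      ∑ a : (ZMod p)ˣ, ∑ b : (ZMod p)ˣ, ∑ c : (ZMod p)ˣ, ∑ z : (ZMod p)ˣ,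
      (ZMod.stdAddChar (N := p) ((z : ZMod p) * (1 + a + b + c) +
        u * (((z⁻¹ : (ZMod p)ˣ) : ZMod p) *
          (1 + ((a⁻¹ : (ZMod p)ˣ) : ZMod p) + ((b⁻¹ : (ZMod p)ˣ) : ZMod p)
            + ((c⁻¹ : (ZMod p)ˣ) : ZMod p)))) : ℂ) := by
    intro u
    rw [pow_succ', pow_three]
    nth_rw 1 [K_eq_stdAddChar]
    rw [Finset.sum_mul, sum_rotate_four]
    refine Finset.sum_congr rfl fun z _ => ?_
    rw [K_rescale p u z, Finset.sum_mul_sum, Finset.sum_mul_sum, Finset.mul_sum]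
    refine Finset.sum_congr rfl fun a _ => ?_
    rw [Finset.mul_sum]
    refine Finset.sum_congr rfl fun b _ => ?_
    rw [Finset.mul_sum, Finset.mul_sum]
    refine Finset.sum_congr rfl fun c _ => ?_
    simp only [← AddChar.map_add_eq_mul]
    congr 1; ring
  simp only [h]
  rw [Finset.sum_comm, Finset.mul_sum]
  refine Finset.sum_congr rfl fun a _ => ?_
  rw [Finset.sum_comm, Finset.mul_sum]
  refine Finset.sum_congr rfl fun b _ => ?_
  rw [Finset.sum_comm, Finset.mul_sum]
  simp only [sum_sum_char]

lemma sum_zmod (g : ZMod p → ℂ) : ∑ i ∈ Finset.range p, g (i : ZMod p) = ∑ u : ZMod p, g u := by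
  refine Finset.sum_bij' (fun i _ => (i : ZMod p)) (fun u _ => u.val) ?_ ?_ ?_ ?_ ?_
  · simp
  · intro u _; simpa using ZMod.val_lt u
  · intro i hi; exact ZMod.val_cast_of_lt (by simpa using hi)
  · simp
  · simp

end PowerSums

/-! ### Counting solutions in units -/

section Counting

variable (p : ℕ) [Fact p.Prime]

lemma card_units_cast : ((Fintype.card (ZMod p)ˣ : ℕ) : ℂ) = p - 1 := by
  rw [ZMod.card_units, Nat.cast_sub (Fact.out : p.Prime).one_le]; simp

lemma sum_unit_ite (s : ZMod p) :
    ∑ c : (ZMod p)ˣ, (if s + c = 0 then (1 : ℂ) else 0) = if s = 0 then 0 else 1 := by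
  by_cases hs : s = 0
  · simp [hs]
  · rw [if_neg hs, Finset.sum_eq_single (-(Units.mk0 s hs))]
    · simp
    · intro c _ hc
      rw [if_neg]
      contrapose! hc
      ext
      push_cast
      simp only [Units.val_mk0]
      linear_combination hc
    · simp

lemma sum_unit_ite' (s : ZMod p) :
    ∑ c : (ZMod p)ˣ, (if s + c = 0 then (0 : ℂ) else 1) = (p - 1) - if s = 0 then 0 else 1 := by
  rw [← sum_unit_ite p s, ← card_units_cast p, eq_sub_iff_add_eq, ← Finset.sum_add_distrib]
  have : ∀ c : (ZMod p)ˣ, ((if s + c = 0 then (0 : ℂ) else 1) + if s + c = 0 then 1 else 0) = 1 := by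
    intro c; split_ifs <;> simp
  simp [this]

lemma sum_unit_inv (g : (ZMod p)ˣ → ℂ) : ∑ a, g a⁻¹ = ∑ a, g a :=
  Equiv.sum_comp (Equiv.inv _) g

lemma count_M3 : ∑ a : (ZMod p)ˣ, ∑ b : (ZMod p)ˣ,
    (if 1 + ((a⁻¹ : (ZMod p)ˣ) : ZMod p) + ((b⁻¹ : (ZMod p)ˣ) : ZMod p) = 0 then (1 : ℂ) else 0)
      = p - 2 := by
  rw [sum_unit_inv p (fun a => ∑ b : (ZMod p)ˣ,
    (if 1 + (a : ZMod p) + ((b⁻¹ : (ZMod p)ˣ) : ZMod p) = 0 then (1 : ℂ) else 0))]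
  simp_rw [fun a : (ZMod p)ˣ => sum_unit_inv p (fun b =>
    (if 1 + (a : ZMod p) + (b : ZMod p) = 0 then (1 : ℂ) else 0)), sum_unit_ite, sum_unit_ite']
  simp; ring

lemma count_M4 : ∑ a : (ZMod p)ˣ, ∑ b : (ZMod p)ˣ, ∑ c : (ZMod p)ˣ,
    (if 1 + ((a⁻¹ : (ZMod p)ˣ) : ZMod p) + ((b⁻¹ : (ZMod p)ˣ) : ZMod p)
      + ((c⁻¹ : (ZMod p)ˣ) : ZMod p) = 0 then (1 : ℂ) else 0)
      = (p : ℂ) ^ 2 - 3 * p + 3 := by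
  rw [sum_unit_inv p (fun a => ∑ b : (ZMod p)ˣ, ∑ c : (ZMod p)ˣ,
    (if 1 + (a : ZMod p) + ((b⁻¹ : (ZMod p)ˣ) : ZMod p)
      + ((c⁻¹ : (ZMod p)ˣ) : ZMod p) = 0 then (1 : ℂ) else 0))]
  simp_rw [fun a : (ZMod p)ˣ => sum_unit_inv p (fun b => ∑ c : (ZMod p)ˣ,
    (if 1 + (a : ZMod p) + (b : ZMod p)
      + ((c⁻¹ : (ZMod p)ˣ) : ZMod p) = 0 then (1 : ℂ) else 0)),
    fun a b : (ZMod p)ˣ => sum_unit_inv p (fun c =>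
    (if 1 + (a : ZMod p) + (b : ZMod p) + c = 0 then (1 : ℂ) else 0)),
    sum_unit_ite, sum_unit_ite', Finset.sum_sub_distrib, sum_unit_ite']
  simp only [Finset.sum_const, Finset.card_univ, nsmul_eq_mul, card_units_cast]
  simp; ring

/-- Completing the square: `a ↦ 2a + 1` maps the roots of `a² + a + 1` bijectively onto the square
roots of `-3`. -/
lemma count_quadratic (hp : 5 ≤ p) :
    ∑ a : (ZMod p)ˣ, (if (a : ZMod p) ^ 2 + a + 1 = 0 then (1 : ℂ) else 0)
      = legendreSym p (-3) + 1 := by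
  have h2 : (2 : ZMod p) ≠ 0 := by
    intro h
    have : ((2 : ℕ) : ZMod p) = 0 := by exact_mod_cast h
    rw [ZMod.natCast_eq_zero_iff] at this
    have := Nat.le_of_dvd (by norm_num) this
    omega
  have h := legendreSym.card_sqrts p (by omega) (-3)
  have h' : ((legendreSym p (-3) : ℤ) : ℂ) + 1 = (((legendreSym p (-3)) + 1 : ℤ) : ℂ) := by
    push_cast; rfl
  rw [h', ← h, Finset.sum_boole, Int.cast_natCast]
  congr 1
  refine Finset.card_bij (fun a _ => 2 * (a : ZMod p) + 1) ?_ ?_ ?_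
  · intro a ha
    simp only [Finset.mem_filter, Finset.mem_univ, true_and] at ha
    simp only [Set.mem_toFinset, Set.mem_ofPred_eq]
    push_cast
    linear_combination 4 * ha
  · intro a _ b _ hab
    ext
    exact mul_left_cancel₀ h2 (add_right_cancel hab)
  · intro y hy
    simp only [Set.mem_toFinset, Set.mem_ofPred_eq] at hy
    push_cast at hy
    have hr : ((y - 1) / 2) ^ 2 + (y - 1) / 2 + 1 = 0 := by
      field_simp; linear_combination hy
    have hne : (y - 1) / 2 ≠ 0 := by
      intro h0; rw [h0] at hr; simp at hr
    refine ⟨Units.mk0 _ hne, ?_, ?_⟩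
    · simpa using hr
    · simp only [Units.val_mk0]; field_simp; ring

lemma count_N3 (hp : 5 ≤ p) : ∑ a : (ZMod p)ˣ, ∑ b : (ZMod p)ˣ,
    (if 1 + ((a⁻¹ : (ZMod p)ˣ) : ZMod p) + ((b⁻¹ : (ZMod p)ˣ) : ZMod p) = 0 then
      (if 1 + (a : ZMod p) + b = 0 then (1 : ℂ) else 0) else 0)
      = legendreSym p (-3) + 1 := by
  rw [← count_quadratic p hp]
  refine Finset.sum_congr rfl fun a _ => ?_
  have ha := a.ne_zero
  -- Under `1 + a + b = 0`, clearing denominators turns the first condition into `a² + a + 1 = 0`.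
  have key : ∀ b : (ZMod p)ˣ,
      (if 1 + ((a⁻¹ : (ZMod p)ˣ) : ZMod p) + ((b⁻¹ : (ZMod p)ˣ) : ZMod p) = 0 then
        (if 1 + (a : ZMod p) + b = 0 then (1 : ℂ) else 0) else 0)
      = (if (a : ZMod p) ^ 2 + a + 1 = 0 then (1 : ℂ) else 0) *
        (if 1 + (a : ZMod p) + b = 0 then (1 : ℂ) else 0) := by
    intro b
    have hb := b.ne_zero
    by_cases hab : 1 + (a : ZMod p) + b = 0
    · have : 1 + ((a⁻¹ : (ZMod p)ˣ) : ZMod p) + ((b⁻¹ : (ZMod p)ˣ) : ZMod p) = 0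
          ↔ (a : ZMod p) ^ 2 + a + 1 = 0 := by
        have hb' : (b : ZMod p) = -1 - a := by linear_combination hab
        rw [Units.val_inv_eq_inv_val, Units.val_inv_eq_inv_val]
        field_simp
        rw [hb']
        constructor <;> intro h <;> linear_combination -h
      rw [if_pos hab, mul_one, if_congr this rfl rfl]
    · rw [if_neg hab, mul_zero, ite_self]
  simp only [key]
  rw [← Finset.mul_sum, sum_unit_ite]
  by_cases h1 : 1 + (a : ZMod p) = 0
  · have h3 : (a : ZMod p) ^ 2 + a + 1 ≠ 0 := by
      have : (a : ZMod p) = -1 := by linear_combination h1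
      rw [this]; ring_nf; exact one_ne_zero
    simp [h3]
  · simp [h1]

/-- For `1 + a + b + c = 0`, the reciprocal condition is equivalent to
`(1 + a) (1 + b) (1 + c) = 0`. -/
lemma recip_iff (a b c : (ZMod p)ˣ) (h : 1 + (a : ZMod p) + b + c = 0) :
    1 + ((a⁻¹ : (ZMod p)ˣ) : ZMod p) + ((b⁻¹ : (ZMod p)ˣ) : ZMod p)
      + ((c⁻¹ : (ZMod p)ˣ) : ZMod p) = 0 ↔ a = -1 ∨ b = -1 ∨ c = -1 := by
  have e : ∀ x : (ZMod p)ˣ, x = -1 ↔ 1 + (x : ZMod p) = 0 := by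
    intro x
    rw [Units.ext_iff, add_comm, add_eq_zero_iff_eq_neg]; simp
  have ha := a.ne_zero
  have hb := b.ne_zero
  have hc := c.ne_zero
  rw [e, e, e, ← mul_eq_zero, ← mul_eq_zero]
  simp only [Units.val_inv_eq_inv_val]
  field_simp
  constructor <;> intro h'
  · linear_combination h' + h
  · linear_combination h' - h

lemma unit_ne_neg (hp : 5 ≤ p) : (1 : (ZMod p)ˣ) ≠ -1 := by
  have : Fact (2 < p) := ⟨by omega⟩
  intro h
  exact ZMod.neg_one_ne_one (n := p) (by simpa using (congrArg Units.val h).symm)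

/-- The solutions `(b, c)` are all `(b, -b)` if `a = -1`; otherwise they are `(-1, -a)` and
`(-a, -1)`, which coincide exactly for `a = 1`. -/
lemma count_N4_inner (hp : 5 ≤ p) (a : (ZMod p)ˣ) : ∑ b : (ZMod p)ˣ, ∑ c : (ZMod p)ˣ,
    (if 1 + ((a⁻¹ : (ZMod p)ˣ) : ZMod p) + ((b⁻¹ : (ZMod p)ˣ) : ZMod p)
        + ((c⁻¹ : (ZMod p)ˣ) : ZMod p) = 0 then
      (if 1 + (a : ZMod p) + b + c = 0 then (1 : ℂ) else 0) else 0)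
      = 2 + (if a = -1 then (p : ℂ) - 3 else 0) - (if a = 1 then 1 else 0) := by
  have hN := unit_ne_neg p hp
  rw [← Fintype.sum_prod_type']
  simp only [← ite_and]
  rw [Finset.sum_boole]
  by_cases ha : a = -1
  · have : (Finset.univ.filter fun x : (ZMod p)ˣ × (ZMod p)ˣ =>
        1 + ((a⁻¹ : (ZMod p)ˣ) : ZMod p) + ((x.1⁻¹ : (ZMod p)ˣ) : ZMod p)
        + ((x.2⁻¹ : (ZMod p)ˣ) : ZMod p) = 0 ∧ 1 + (a : ZMod p) + x.1 + x.2 = 0)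
        = Finset.univ.image fun b => (b, -b) := by
      ext ⟨b, c⟩
      simp only [Finset.mem_filter, Finset.mem_univ, true_and, Finset.mem_image, Prod.mk.injEq,
        exists_eq_left]
      rw [and_congr_left (recip_iff p a b c)]
      subst ha
      simp only [true_or, true_and]
      rw [Units.ext_iff]
      push_cast
      constructor <;> intro h <;> linear_combination -h
    rw [this, Finset.card_image_of_injective _ (fun x y h => (Prod.mk.inj h).1), Finset.card_univ,
      card_units_cast, if_pos ha, if_neg (by rw [ha]; exact hN.symm)]
    ring
  · have : (Finset.univ.filter fun x : (ZMod p)ˣ × (ZMod p)ˣ =>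
        1 + ((a⁻¹ : (ZMod p)ˣ) : ZMod p) + ((x.1⁻¹ : (ZMod p)ˣ) : ZMod p)
        + ((x.2⁻¹ : (ZMod p)ˣ) : ZMod p) = 0 ∧ 1 + (a : ZMod p) + x.1 + x.2 = 0)
        = {(-1, -a), (-a, -1)} := by
      ext ⟨b, c⟩
      simp only [Finset.mem_filter, Finset.mem_univ, true_and, Finset.mem_insert,
        Finset.mem_singleton, Prod.mk.injEq]
      rw [and_congr_left (recip_iff p a b c)]
      simp only [ha, false_or]
      constructor
      · rintro ⟨rfl | rfl, h⟩
        · left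
          refine ⟨rfl, Units.ext ?_⟩
          push_cast at h ⊢
          linear_combination h
        · right
          refine ⟨Units.ext ?_, rfl⟩
          push_cast at h ⊢
          linear_combination h
      · rintro (⟨rfl, rfl⟩ | ⟨rfl, rfl⟩) <;> simp
    rw [this, if_neg ha]
    by_cases h1 : a = 1
    · simp [h1]; norm_num
    · rw [Finset.card_pair, if_neg h1]
      · simp
      · intro h
        exact h1 (neg_injective (Prod.mk.inj h).1.symm)

lemma count_N4 (hp : 5 ≤ p) : ∑ a : (ZMod p)ˣ, ∑ b : (ZMod p)ˣ, ∑ c : (ZMod p)ˣ,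
    (if 1 + ((a⁻¹ : (ZMod p)ˣ) : ZMod p) + ((b⁻¹ : (ZMod p)ˣ) : ZMod p)
        + ((c⁻¹ : (ZMod p)ˣ) : ZMod p) = 0 then
      (if 1 + (a : ZMod p) + b + c = 0 then (1 : ℂ) else 0) else 0)
      = 3 * ((p : ℂ) - 2) := by
  simp only [count_N4_inner p hp, Finset.sum_sub_distrib, Finset.sum_add_distrib,
    Finset.sum_const, Finset.card_univ, nsmul_eq_mul, card_units_cast, Finset.sum_ite_eq',
    Finset.mem_univ, if_true]
  ring

end Counting

/-! ### The third and fourth power sums -/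

section Assembly

variable (p : ℕ) [Fact p.Prime]

lemma ite_split (P Q : Prop) [Decidable P] [Decidable Q] (t : ℂ) :
    (if P then (t * (if Q then 1 else 0) - 1) else 0)
      = t * (if P then (if Q then 1 else 0) else 0) - (if P then 1 else 0) := by
  split_ifs <;> simp

lemma sum_K_cube (hp : 5 ≤ p) :
    ∑ u : ZMod p, K p u ^ 3 = (p : ℂ) * (legendreSym p (-3) * p + 2) := by
  rw [sum_K_cube_aux]
  simp only [ite_split, Finset.sum_sub_distrib, ← Finset.mul_sum, count_M3, count_N3 p hp]
  ring

lemma sum_K_four (hp : 5 ≤ p) :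
    ∑ u : ZMod p, K p u ^ 4 = (p : ℂ) * (2 * (p : ℂ) ^ 2 - 3 * p - 3) := by
  rw [sum_K_four_aux]
  simp only [ite_split, Finset.sum_sub_distrib, ← Finset.mul_sum, count_M4, count_N4 p hp]
  ring

end Assembly

/-- For a prime `p ≥ 5`, writing `K_u = K(u)` for `u = 0,…,p−1`:
`∑_{j<k} K_j·K_k = −(p²−p)/2`,
`∑_{i<j<k} K_i·K_j·K_k = (p/3)·[((−3)/p)·p + 2]`, and
`∑_{i<j<k<l} K_i·K_j·K_k·K_l = (1/8)·p·(p−3)·(p²−3p−2)`. -/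
theorem stmt16 (p : ℕ) [Fact p.Prime] (hp : 5 ≤ p) :
    (∑ k ∈ Finset.range p, ∑ j ∈ Finset.range k,
        K p (j : ZMod p) * K p (k : ZMod p)
      = -((p : ℂ) ^ 2 - (p : ℂ)) / 2) ∧
    (∑ k ∈ Finset.range p, ∑ j ∈ Finset.range k, ∑ i ∈ Finset.range j,
        K p (i : ZMod p) * K p (j : ZMod p) * K p (k : ZMod p)
      = ((p : ℂ) / 3) * ((legendreSym p (-3) : ℂ) * (p : ℂ) + 2)) ∧
    (∑ l ∈ Finset.range p, ∑ k ∈ Finset.range l, ∑ j ∈ Finset.range k,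
        ∑ i ∈ Finset.range j,
        K p (i : ZMod p) * K p (j : ZMod p) * K p (k : ZMod p) * K p (l : ZMod p)
      = (1 / 8 : ℂ) * (p : ℂ) * ((p : ℂ) - 3) * ((p : ℂ) ^ 2 - 3 * (p : ℂ) - 2)) := by
  have e1 := (sum_zmod p (fun u => K p u)).trans (sum_K p)
  have e2 := (sum_zmod p (fun u => K p u ^ 2)).trans (sum_K_sq p)
  have e3 := (sum_zmod p (fun u => K p u ^ 3)).trans (sum_K_cube p hp)
  have e4 := (sum_zmod p (fun u => K p u ^ 4)).trans (sum_K_four p hp)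
  refine ⟨?_, ?_, ?_⟩
  · rw [newton_two (fun i : ℕ => K p (i : ZMod p)), e1, e2]; ring
  · rw [newton_three (fun i : ℕ => K p (i : ZMod p)), e1, e2, e3]; ring
  · rw [newton_four (fun i : ℕ => K p (i : ZMod p)), e1, e2, e3, e4]; ring
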